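/- Let ρ, σ be positive definite d×d density matrices with ρ ≤ c·σ for some c > 1. Then k(c)·γ_σ(ρ−σ) ≤ D(ρ‖σ) ≤ γ_σ(ρ−σ), where k(c) = (c ln c − c + 1)/(c−1)², γ is the BKM metric, and D is the quantum relative entropy. -/

import Mathlib

open Matrix MeasureTheory
open scoped ComplexOrder

noncomputable section

variable {d : ℕ}

/-- Matrix logarithm of a Hermitian matrix via spectral decomposition (junk value `0`
otherwise). -/
def mlog (A : Matrix (Fin d) (Fin d) ℂ) : Matrix (Fin d) (Fin d) ℂ :=
  if hA : A.IsHermitian then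
    (hA.eigenvectorUnitary : Matrix (Fin d) (Fin d) ℂ) *
      Matrix.diagonal (fun i => (Real.log (hA.eigenvalues i) : ℂ)) *
      star (hA.eigenvectorUnitary : Matrix (Fin d) (Fin d) ℂ)
  else 0

/-- Quantum relative entropy `D(ρ‖σ) = tr(ρ log ρ − ρ log σ)`. -/
def relEnt (ρ σ : Matrix (Fin d) (Fin d) ℂ) : ℝ := ((ρ * mlog ρ - ρ * mlog σ).trace).re

/-- The Bogoliubov–Kubo–Mori metric. -/
def bkm (ω X : Matrix (Fin d) (Fin d) ℂ) : ℝ :=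
  ∫ s in Set.Ioi (0 : ℝ),
    ((Xᴴ * (ω + (s : ℂ) • (1 : Matrix (Fin d) (Fin d) ℂ))⁻¹ * X *
      (ω + (s : ℂ) • (1 : Matrix (Fin d) (Fin d) ℂ))⁻¹).trace).re

/-- The comparison constant `k(c) = (c ln c − c + 1)/(c−1)²`. -/
def kfun (c : ℝ) : ℝ := (c * Real.log c - c + 1) / (c - 1) ^ 2

/-!
Along the segment `p t = σ + t (ρ - σ)` the function `t ↦ relEnt (p t) σ` vanishes at `0`, has
derivative `tr (ρ - σ)` there, and has second derivative `bkm (p t) (ρ - σ)`. The metric `bkm ω X`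
is antitone in `ω` and homogeneous of degree `-1`, so the Loewner bounds
`(1 - t) σ ≤ p t ≤ (1 + (c - 1) t) σ` trap this second derivative between
`bkm σ (ρ - σ) / (1 + (c - 1) t)` and `bkm σ (ρ - σ) / (1 - t)`. Integrating twice turns
`1 / (1 + (b - 1) t)` into `kfun b`; the upper bound is the case `b = 0`, where `kfun 0 = 1`.

The first derivative needs no differentiation of `log`: Klein's inequality says that the candidate
is a subgradient, and a continuous subgradient is a derivative. The second comes from
`log a = ∫ ((1 + s)⁻¹ - (a + s)⁻¹) ds` by differentiating resolvents under the integral sign.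
-/

section Scalar

open Set Filter Topology InformationTheory

theorem hasDerivAt_of_subgradient {f f' : ℝ → ℝ} {x : ℝ} (hf' : ContinuousAt f' x)
    (hf : ∀ᶠ v in 𝓝 x, (v - x) * f' x ≤ f v - f x ∧ f v - f x ≤ (v - x) * f' v) :
    HasDerivAt f (f' x) x := by
  have hsmall : (fun v => (v - x) * (f' v - f' x)) =o[𝓝 x] fun v => v - x := by
    simpa using (Asymptotics.isBigO_refl (fun v => v - x) (𝓝 x)).mul_isLittleO
      ((Asymptotics.isLittleO_one_iff ℝ).2 (tendsto_sub_nhds_zero_iff.2 hf'))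
  refine hasDerivAt_iff_isLittleO.2 (Asymptotics.IsBigO.trans_isLittleO ?_ hsmall)
  refine Asymptotics.IsBigO.of_bound 1 ?_
  filter_upwards [hf] with v ⟨hlow, hup⟩
  rw [smul_eq_mul, one_mul, Real.norm_of_nonneg (by linarith), mul_sub]
  exact (sub_le_sub_right hup _).trans (le_abs_self _)

theorem increment_le_of_second_deriv_le {f f' f'' g g' g'' : ℝ → ℝ} {a b : ℝ} (hab : a < b)
    (hfc : ContinuousOn f (Icc a b)) (hgc : ContinuousOn g (Icc a b))
    (hf : ∀ t ∈ Ico a b, HasDerivAt f (f' t) t) (hf' : ∀ t ∈ Ioo a b, HasDerivAt f' (f'' t) t)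
    (hg : ∀ t ∈ Ico a b, HasDerivAt g (g' t) t) (hg' : ∀ t ∈ Ioo a b, HasDerivAt g' (g'' t) t)
    (hle : ∀ t ∈ Ioo a b, f'' t ≤ g'' t) :
    f b - f a - f' a * (b - a) ≤ g b - g a - g' a * (b - a) := by
  have hconv : ConvexOn ℝ (Icc a b) (g - f) := by
    refine convexOn_of_hasDerivWithinAt2_nonneg (f' := g' - f') (f'' := g'' - f'')
      (convex_Icc a b) (hgc.sub hfc) ?_ ?_ ?_ <;> rw [interior_Icc] <;> intro t ht
    · have ht' := Ioo_subset_Ico_self ht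
      exact ((hg t ht').sub (hf t ht')).hasDerivWithinAt
    · exact ((hg' t ht).sub (hf' t ht)).hasDerivWithinAt
    · exact sub_nonneg.2 (hle t ht)
  have hslope := hconv.le_slope_of_hasDerivAt (left_mem_Icc.2 hab.le) (right_mem_Icc.2 hab.le) hab
    ((hg a (left_mem_Ico.2 hab)).sub (hf a (left_mem_Ico.2 hab)))
  rw [slope_def_field, le_div_iff₀ (sub_pos.2 hab)] at hslope
  simp only [Pi.sub_apply] at hslope
  linarith

theorem one_add_mul_pos {b t : ℝ} (hb : 0 ≤ b) (ht : t ∈ Ico (0 : ℝ) 1) :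
    0 < 1 + (b - 1) * t := by
  nlinarith [ht.2, mul_nonneg hb ht.1]

/-- The solution `Λ` of `Λ'' t = 1 / (1 + (b - 1) t)`, `Λ 0 = Λ' 0 = 0`. Its value at `1` is
`kfun b`. -/
def kfunProfile (b t : ℝ) : ℝ := klFun (1 + (b - 1) * t) / (b - 1) ^ 2

theorem kfunProfile_zero (b : ℝ) : kfunProfile b 0 = 0 := by
  simp [kfunProfile, klFun_one]

theorem kfunProfile_one (b : ℝ) : kfunProfile b 1 = kfun b := by
  simp only [kfunProfile, klFun, kfun]
  ring_nf

theorem continuous_kfunProfile (b : ℝ) : Continuous (kfunProfile b) := by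
  have := continuous_klFun
  unfold kfunProfile
  fun_prop

theorem hasDerivAt_one_add_mul (b t : ℝ) :
    HasDerivAt (fun t => 1 + (b - 1) * t) (b - 1) t := by
  simpa using ((hasDerivAt_id t).const_mul (b - 1)).const_add 1

theorem hasDerivAt_kfunProfile {b t : ℝ} (hb : b ≠ 1) (ht : 1 + (b - 1) * t ≠ 0) :
    HasDerivAt (kfunProfile b) (Real.log (1 + (b - 1) * t) / (b - 1)) t := by
  have hb' : b - 1 ≠ 0 := sub_ne_zero.2 hb
  convert! ((hasDerivAt_klFun ht).comp t (hasDerivAt_one_add_mul b t)).div_const ((b - 1) ^ 2)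
    using 1
  field_simp

theorem hasDerivAt_log_one_add_mul_div {b t : ℝ} (hb : b ≠ 1) (ht : 1 + (b - 1) * t ≠ 0) :
    HasDerivAt (fun t => Real.log (1 + (b - 1) * t) / (b - 1)) (1 + (b - 1) * t)⁻¹ t := by
  have hb' : b - 1 ≠ 0 := sub_ne_zero.2 hb
  convert! ((hasDerivAt_one_add_mul b t).log ht).div_const (b - 1) using 1
  field_simp

theorem kfun_zero : kfun 0 = 1 := by simp [kfun]

section Comparison

variable {f f' f'' : ℝ → ℝ} {b g : ℝ}

theorem le_kfun_mul_of_second_deriv_le (hb : 0 ≤ b) (hb1 : b ≠ 1)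
    (hfc : ContinuousOn f (Icc 0 1)) (hf : ∀ t ∈ Ico 0 1, HasDerivAt f (f' t) t)
    (hf' : ∀ t ∈ Ioo 0 1, HasDerivAt f' (f'' t) t)
    (hle : ∀ t ∈ Ioo 0 1, f'' t ≤ g / (1 + (b - 1) * t)) :
    f 1 - f 0 - f' 0 ≤ kfun b * g := by
  have hpos : ∀ t ∈ Ico (0 : ℝ) 1, 1 + (b - 1) * t ≠ 0 := fun t ht => (one_add_mul_pos hb ht).ne'
  have h := increment_le_of_second_deriv_le zero_lt_one hfc
    ((continuous_kfunProfile b).const_mul g).continuousOn hf hf'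
    (fun t ht => (hasDerivAt_kfunProfile hb1 (hpos t ht)).const_mul g)
    (fun t ht => (hasDerivAt_log_one_add_mul_div hb1 (hpos t (Ioo_subset_Ico_self ht))).const_mul g)
    hle
  simpa [kfunProfile_zero, kfunProfile_one, mul_comm] using h

theorem kfun_mul_le_of_le_second_deriv (hb : 0 ≤ b) (hb1 : b ≠ 1)
    (hfc : ContinuousOn f (Icc 0 1)) (hf : ∀ t ∈ Ico 0 1, HasDerivAt f (f' t) t)
    (hf' : ∀ t ∈ Ioo 0 1, HasDerivAt f' (f'' t) t)
    (hle : ∀ t ∈ Ioo 0 1, g / (1 + (b - 1) * t) ≤ f'' t) :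
    kfun b * g ≤ f 1 - f 0 - f' 0 := by
  have h := le_kfun_mul_of_second_deriv_le (f := -f) (f' := -f') (f'' := -f'') (g := -g) hb hb1
    hfc.neg (fun t ht => (hf t ht).neg) (fun t ht => (hf' t ht).neg)
    (fun t ht => by simpa [neg_div] using hle t ht)
  simp only [Pi.neg_apply] at h
  linarith

end Comparison

theorem sub_le_mul_log_sub_mul_log {a b : ℝ} (ha : 0 ≤ a) (hb : 0 < b) :
    a - b ≤ a * Real.log a - a * Real.log b := by
  rcases ha.eq_or_lt with rfl | ha
  · simpa using hb.le
  have h := mul_nonneg hb.le (klFun_nonneg (div_nonneg ha.le hb.le))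
  rw [klFun, Real.log_div ha.ne' hb.ne'] at h
  field_simp at h
  linarith

theorem integrableOn_inv_add_mul_inv_add {p q : ℝ} (hp : 0 < p) (hq : 0 < q) :
    IntegrableOn (fun s => (p + s)⁻¹ * (q + s)⁻¹) (Ioi 0) := by
  have hm : 0 < min p q := lt_min hp hq
  refine ((integrableOn_add_rpow_Ioi_of_lt (a := -2) (by norm_num) (by linarith :
    -(min p q) < 0))).mono' (by fun_prop) ?_
  filter_upwards [self_mem_ae_restrict measurableSet_Ioi] with s hs
  have hs : 0 < s := hs
  rw [Real.norm_of_nonneg (by positivity), Real.rpow_neg (by positivity), Real.rpow_two, add_comm s,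
    sq, mul_inv]
  gcongr
  exacts [min_le_left p q, min_le_right p q]

theorem integrableOn_inv_add_sub_inv_add {a : ℝ} (ha : 0 < a) :
    IntegrableOn (fun s => (1 + s)⁻¹ - (a + s)⁻¹) (Ioi 0) := by
  refine IntegrableOn.congr_fun ((integrableOn_inv_add_mul_inv_add one_pos ha).const_mul (a - 1))
    (fun s (hs : 0 < s) => ?_) measurableSet_Ioi
  field_simp
  ring

theorem integral_inv_add_sub_inv_add {a : ℝ} (ha : 0 < a) :
    ∫ s in Ioi (0 : ℝ), ((1 + s)⁻¹ - (a + s)⁻¹) = Real.log a := by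
  have hderiv : ∀ s ∈ Ici (0 : ℝ), HasDerivAt (fun s => Real.log (1 + s) - Real.log (a + s))
      ((1 + s)⁻¹ - (a + s)⁻¹) s := fun s (hs : 0 ≤ s) => by
    simpa only [one_div] using
      (((hasDerivAt_id' s).const_add 1).log (by positivity)).fun_sub
        (((hasDerivAt_id' s).const_add a).log (by positivity))
  have hlim : Tendsto (fun s => Real.log (1 + s) - Real.log (a + s)) atTop (𝓝 0) := by
    simpa [add_comm] using (Real.tendsto_log_comp_add_sub_log 1).sub
      (Real.tendsto_log_comp_add_sub_log a)
  simpa using integral_Ioi_of_hasDerivAt_of_tendsto' hderiv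
    (integrableOn_inv_add_sub_inv_add ha) hlim

end Scalar

section TraceOrder

open scoped MatrixOrder

theorem posDef_of_le {n : Type*} {A B : Matrix n n ℂ} (hA : A.PosDef) (hAB : A ≤ B) :
    B.PosDef := by
  simpa using hA.add_posSemidef (le_iff.1 hAB)

theorem eventually_neg_le_smul {n : Type*} [Finite n] {A X : Matrix n n ℂ} (hA : A.PosDef)
    (hX : X.IsHermitian) : ∀ᶠ r in nhds (0 : ℝ), -A ≤ r • X := by
  open scoped Matrix.Norms.L2Operator in
  cases nonempty_fintype n
  classical
  cases isEmpty_or_nonempty n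
  · exact .of_forall fun r => (Subsingleton.elim _ _).le
  obtain ⟨m, hm, hmA⟩ := (CFC.exists_pos_algebraMap_le_iff hA.isHermitian).2
    fun _ => hA.isStrictlyPositive.spectrum_pos
  have hsmall : ∀ᶠ r in nhds (0 : ℝ), ‖r • X‖ < m :=
    (by fun_prop : Continuous fun r : ℝ => ‖r • X‖).continuousAt.eventually_lt_const (by simpa)
  filter_upwards [hsmall] with r hr
  have hrX : IsSelfAdjoint (r • X) := .smul (.all r) hX
  calc -A ≤ -algebraMap ℝ _ m := neg_le_neg hmA
    _ ≤ -algebraMap ℝ _ ‖r • X‖ := neg_le_neg (algebraMap_mono _ hr.le)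
    _ ≤ r • X := hrX.neg_algebraMap_norm_le_self

theorem eventually_half_smul_le_add_smul {n : Type*} [Finite n] {A X : Matrix n n ℂ} {t : ℝ}
    (hA : (A + t • X).PosDef) (hX : X.IsHermitian) :
    ∀ᶠ u in nhds t, (2⁻¹ : ℝ) • (A + t • X) ≤ A + u • X := by
  have hsub : Filter.Tendsto (fun u : ℝ => u - t) (nhds t) (nhds 0) :=
    tendsto_sub_nhds_zero_iff.2 Filter.tendsto_id
  have hneg := eventually_neg_le_smul (hA.smul (by norm_num : (0 : ℝ) < 2⁻¹)) hX
  filter_upwards [hsub.eventually hneg] with u hu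
  calc (2⁻¹ : ℝ) • (A + t • X) = (A + t • X) + -((2⁻¹ : ℝ) • (A + t • X)) := by module
    _ ≤ (A + t • X) + (u - t) • X := by gcongr
    _ = A + u • X := by module

variable {n : Type*} [Fintype n] {A B P Q P' Q' : Matrix n n ℂ}

theorem re_trace_mul_nonneg (hP : 0 ≤ P) (hQ : 0 ≤ Q) : 0 ≤ (P * Q).trace.re := by
  classical
  obtain ⟨R, rfl⟩ := CStarAlgebra.nonneg_iff_eq_star_mul_self.1 hP
  rw [mul_assoc, trace_mul_comm]
  have h := (nonneg_iff_posSemidef.1 (star_right_conjugate_nonneg hQ R)).trace_nonneg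
  exact (Complex.le_def.1 h).1

theorem re_trace_conjTranspose_mul_mul_mul_mono (X : Matrix n n ℂ) (hP : 0 ≤ P) (hQ' : 0 ≤ Q')
    (hPP' : P ≤ P') (hQQ' : Q ≤ Q') :
    (Xᴴ * P * X * Q).trace.re ≤ (Xᴴ * P' * X * Q').trace.re := by
  have h1 := re_trace_mul_nonneg (star_left_conjugate_nonneg (sub_nonneg.2 hPP') X) hQ'
  have h2 := re_trace_mul_nonneg (star_left_conjugate_nonneg hP X) (sub_nonneg.2 hQQ')
  simp only [star_eq_conjTranspose, mul_sub, sub_mul, trace_sub, Complex.sub_re] at h1 h2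
  linarith

variable [DecidableEq n]

theorem inv_le_inv_of_posDef (hA : A.PosDef) (hAB : A ≤ B) : B⁻¹ ≤ A⁻¹ := by
  rw [nonsing_inv_eq_ringInverse, nonsing_inv_eq_ringInverse]
  open scoped Matrix.Norms.L2Operator in
  exact CStarAlgebra.ringInverse_le_ringInverse hAB hA.isStrictlyPositive

end TraceOrder

section FunctionalCalculus

variable {n : Type*} [Fintype n] [DecidableEq n] {A B : Matrix n n ℂ}

theorem re_trace_mul_cfc (hA : A.IsHermitian) (X : Matrix n n ℂ) (f : ℝ → ℝ) :
    (X * cfc f A).trace.re = ∑ i, f (hA.eigenvalues i) *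
      ((star (hA.eigenvectorUnitary : Matrix n n ℂ) * X * hA.eigenvectorUnitary) i i).re := by
  rw [hA.cfc_eq, Matrix.IsHermitian.cfc, Unitary.conjStarAlgAut_apply, ← mul_assoc, trace_mul_comm,
    ← mul_assoc, ← mul_assoc, trace, Complex.re_sum]
  refine Finset.sum_congr rfl fun i _ => ?_
  simp [diag_apply, mul_diagonal, mul_comm]

/-- The squared modulus of the `(i, j)` entry of `X` in the eigenbases of `A` and `B`. These are
the weights expressing traces of functions of `A` and `B` as sums over pairs of eigenvalues. -/
def eigenOverlap (hA : A.IsHermitian) (hB : B.IsHermitian) (X : Matrix n n ℂ) (i j : n) : ℝ :=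
  Complex.normSq
    ((star (hA.eigenvectorUnitary : Matrix n n ℂ) * X * hB.eigenvectorUnitary) i j)

theorem re_trace_conjTranspose_mul_cfc_mul_cfc (hA : A.IsHermitian) (hB : B.IsHermitian)
    (X : Matrix n n ℂ) (f g : ℝ → ℝ) :
    (Xᴴ * cfc f A * X * cfc g B).trace.re = ∑ j, ∑ i,
      eigenOverlap hA hB X i j * (f (hA.eigenvalues i) * g (hB.eigenvalues j)) := by
  rw [re_trace_mul_cfc hB, hA.cfc_eq, Matrix.IsHermitian.cfc, Unitary.conjStarAlgAut_apply]
  refine Finset.sum_congr rfl fun j _ => ?_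
  set U : Matrix n n ℂ := ↑hA.eigenvectorUnitary with hU
  set V : Matrix n n ℂ := ↑hB.eigenvectorUnitary with hV
  set Y := star U * X * V with hY
  have hconj : star V * (Xᴴ * (U * diagonal (RCLike.ofReal ∘ f ∘ hA.eigenvalues) * star U) * X) * V
      = Yᴴ * (diagonal (RCLike.ofReal ∘ f ∘ hA.eigenvalues) * Y) := by
    simp only [hY, conjTranspose_mul, star_eq_conjTranspose, conjTranspose_conjTranspose, mul_assoc]
  rw [hconj, mul_apply, Complex.re_sum, Finset.mul_sum]
  refine Finset.sum_congr rfl fun i _ => ?_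
  simp [eigenOverlap, ← hU, ← hV, ← hY, diagonal_mul, Complex.normSq_apply]
  ring

theorem continuous_cfc_add_smul {X : Matrix n n ℂ} (hA : A.IsHermitian) (hX : X.IsHermitian)
    {f : ℝ → ℝ} (hf : Continuous f) : Continuous fun t : ℝ => cfc f (A + t • X) := by
  open scoped Matrix.Norms.L2Operator in
  exact Continuous.cfc_of_mem_nhdsSet (s := Set.univ) f Filter.univ_mem (by fun_prop)
    (fun t => hA.add (hX.smul (.all t))) hf.continuousOn

theorem mlog_eq_cfc (A : Matrix (Fin d) (Fin d) ℂ) : mlog A = cfc Real.log A := by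
  by_cases hA : A.IsHermitian
  · rw [mlog, dif_pos hA, hA.cfc_eq, Matrix.IsHermitian.cfc, Unitary.conjStarAlgAut_apply]
    rfl
  · rw [mlog, dif_neg hA]
    exact (cfc_apply_of_not_predicate (p := IsSelfAdjoint) A hA).symm

theorem mul_mlog_self {A : Matrix (Fin d) (Fin d) ℂ} (hA : A.IsHermitian) :
    A * mlog A = cfc (fun x => x * Real.log x) A := by
  rw [cfc_mul _ _ A (by fun_prop) (A.finite_real_spectrum.continuousOn _), cfc_id' ℝ A, mlog_eq_cfc]

end FunctionalCalculus

section ShiftedInverse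

open Set
open scoped MatrixOrder

theorem posDef_add_smul_one {n : Type*} [DecidableEq n] {A : Matrix n n ℂ} {s : ℝ} (hA : A.PosDef)
    (hs : 0 ≤ s) : (A + (s : ℂ) • 1).PosDef :=
  hA.add_posSemidef (PosSemidef.one.smul (Complex.zero_le_real.2 hs))

variable {n : Type*} [Fintype n] [DecidableEq n] {A B X : Matrix n n ℂ} {a s : ℝ}

/-- The inverse `(A + s)⁻¹`, in terms of which both `bkm` and the matrix logarithm are integrals
over `s > 0`. -/
def shiftedInv (A : Matrix n n ℂ) (s : ℝ) : Matrix n n ℂ := (A + (s : ℂ) • 1)⁻¹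

theorem shiftedInv_nonneg (hA : A.PosDef) (hs : 0 ≤ s) : 0 ≤ shiftedInv A s :=
  (posDef_add_smul_one hA hs).inv.posSemidef.nonneg

theorem shiftedInv_antitone (hA : A.PosDef) (hAB : A ≤ B) (hs : 0 ≤ s) :
    shiftedInv B s ≤ shiftedInv A s :=
  inv_le_inv_of_posDef (posDef_add_smul_one hA hs) (by gcongr)

theorem shiftedInv_smul (ha : a ≠ 0) (A : Matrix n n ℂ) (s : ℝ) :
    shiftedInv (a • A) (a * s) = a⁻¹ • shiftedInv A s := by
  have hsmul : a • A + ((a * s : ℝ) : ℂ) • 1 = a • (A + (s : ℂ) • 1) := by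
    rw [Complex.ofReal_mul, mul_smul, Complex.coe_smul, smul_add]
  have hscalar : (algebraMap ℝ (Matrix n n ℂ) a)⁻¹ = algebraMap ℝ (Matrix n n ℂ) a⁻¹ :=
    inv_eq_right_inv (by rw [← map_mul, mul_inv_cancel₀ ha, map_one])
  rw [shiftedInv, shiftedInv, hsmul, Algebra.smul_def, Matrix.mul_inv_rev, hscalar,
    ← Algebra.commutes, ← Algebra.smul_def]

theorem shiftedInv_eq_cfc (hA : A.PosDef) (hs : 0 ≤ s) :
    shiftedInv A s = cfc (fun x : ℝ => (x + s)⁻¹) A := by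
  have hshift : A + (s : ℂ) • 1 = cfc (fun x : ℝ => x + s) A := by
    rw [cfc_add_const s (fun x => x) A, cfc_id' ℝ A, Complex.coe_smul,
      Algebra.algebraMap_eq_smul_one]
  rw [shiftedInv, hshift, nonsing_inv_eq_ringInverse, cfc_inv (fun x : ℝ => x + s) A]
  intro x hx
  have := hA.isStrictlyPositive.spectrum_pos hx
  positivity

/-- The integrand of the Bogoliubov–Kubo–Mori metric `bkm A X`. -/
def bkmIntegrand (A X : Matrix n n ℂ) (s : ℝ) : ℝ :=
  (Xᴴ * shiftedInv A s * X * shiftedInv A s).trace.re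

theorem integrableOn_bkmIntegrand (hA : A.PosDef) (X : Matrix n n ℂ) :
    IntegrableOn (bkmIntegrand A X) (Ioi 0) := by
  refine IntegrableOn.congr_fun (f := fun s => ∑ j, ∑ i, eigenOverlap hA.1 hA.1 X i j *
    ((hA.1.eigenvalues i + s)⁻¹ * (hA.1.eigenvalues j + s)⁻¹)) ?_ (fun s (hs : 0 < s) => ?_)
    measurableSet_Ioi
  · exact integrable_finsetSum _ fun j _ => integrable_finsetSum _ fun i _ =>
      (integrableOn_inv_add_mul_inv_add (hA.eigenvalues_pos i) (hA.eigenvalues_pos j)).const_mul _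
  · rw [bkmIntegrand, shiftedInv_eq_cfc hA hs.le, re_trace_conjTranspose_mul_cfc_mul_cfc hA.1 hA.1]

theorem bkmIntegrand_nonneg (hA : A.PosDef) (X : Matrix n n ℂ) (hs : 0 ≤ s) :
    0 ≤ bkmIntegrand A X s :=
  re_trace_mul_nonneg (star_left_conjugate_nonneg (shiftedInv_nonneg hA hs) X)
    (shiftedInv_nonneg hA hs)

theorem bkmIntegrand_antitone (hA : A.PosDef) (hAB : A ≤ B) (X : Matrix n n ℂ) (hs : 0 ≤ s) :
    bkmIntegrand B X s ≤ bkmIntegrand A X s :=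
  re_trace_conjTranspose_mul_mul_mul_mono X (shiftedInv_nonneg (posDef_of_le hA hAB) hs)
    (shiftedInv_nonneg hA hs) (shiftedInv_antitone hA hAB hs) (shiftedInv_antitone hA hAB hs)

theorem bkmIntegrand_smul (ha : a ≠ 0) (A X : Matrix n n ℂ) (s : ℝ) :
    bkmIntegrand (a • A) X (a * s) = a⁻¹ ^ 2 * bkmIntegrand A X s := by
  simp only [bkmIntegrand, shiftedInv_smul ha, mul_smul_comm, smul_mul_assoc, smul_smul,
    trace_smul, Complex.smul_re, smul_eq_mul, sq]

/-- The integrand representing `tr (X log A)`, coming from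
`log a = ∫ ((1 + s)⁻¹ - (a + s)⁻¹) ds` over `s > 0`. -/
def logIntegrand (A X : Matrix n n ℂ) (s : ℝ) : ℝ :=
  (1 + s)⁻¹ * X.trace.re - (X * shiftedInv A s).trace.re

theorem logIntegrand_eq_sum (hA : A.PosDef) (hs : 0 ≤ s) (X : Matrix n n ℂ) :
    logIntegrand A X s = ∑ i, ((1 + s)⁻¹ - (hA.1.eigenvalues i + s)⁻¹) *
      ((star (hA.1.eigenvectorUnitary : Matrix n n ℂ) * X * hA.1.eigenvectorUnitary) i i).re := by
  have htrace := re_trace_mul_cfc hA.1 X (fun _ => 1)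
  rw [cfc_const_one ℝ A, mul_one] at htrace
  simp only [logIntegrand, shiftedInv_eq_cfc hA hs, re_trace_mul_cfc hA.1, htrace, Finset.mul_sum,
    ← Finset.sum_sub_distrib, one_mul, sub_mul]

theorem integrableOn_logIntegrand (hA : A.PosDef) (X : Matrix n n ℂ) :
    IntegrableOn (logIntegrand A X) (Ioi 0) :=
  IntegrableOn.congr_fun
    (integrable_finsetSum _ fun i _ =>
      (integrableOn_inv_add_sub_inv_add (hA.eigenvalues_pos i)).mul_const _)
    (fun _ (hs : 0 < _) => (logIntegrand_eq_sum hA hs.le X).symm) measurableSet_Ioi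

theorem integral_logIntegrand (hA : A.PosDef) (X : Matrix n n ℂ) :
    ∫ s in Ioi 0, logIntegrand A X s = (X * cfc Real.log A).trace.re := by
  rw [setIntegral_congr_fun measurableSet_Ioi fun _ (hs : 0 < _) => logIntegrand_eq_sum hA hs.le X,
    integral_finsetSum _ fun i _ =>
      (integrableOn_inv_add_sub_inv_add (hA.eigenvalues_pos i)).mul_const _, re_trace_mul_cfc hA.1]
  simp only [integral_mul_const, integral_inv_add_sub_inv_add (hA.eigenvalues_pos _)]

theorem hasDerivAt_shiftedInv {t : ℝ} (hs : 0 ≤ s) (hA : (A + t • X).PosDef) :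
    HasDerivAt (fun t => shiftedInv (A + t • X) s)
      (-(shiftedInv (A + t • X) s * X * shiftedInv (A + t • X) s)) t := by
  open scoped Matrix.Norms.L2Operator in
  simp only [shiftedInv, nonsing_inv_eq_ringInverse]
  obtain ⟨u, hu⟩ := (posDef_add_smul_one hA hs).isUnit
  have hline : HasDerivAt (fun t : ℝ => A + t • X + (s : ℂ) • 1) X t := by
    simpa using (((hasDerivAt_id t).smul_const X).const_add A).add_const ((s : ℂ) • 1)
  have hinv := hasFDerivAt_ringInverse (𝕜 := ℝ) u
  rw [hu] at hinv
  have hcomp := hinv.comp_hasDerivAt t hline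
  simp only [_root_.neg_apply, ContinuousLinearMap.mulLeftRight_apply] at hcomp
  rw [← hu, Ring.inverse_unit]
  exact hcomp

theorem hasDerivAt_logIntegrand {t : ℝ} (hX : X.IsHermitian) (hs : 0 ≤ s)
    (hA : (A + t • X).PosDef) :
    HasDerivAt (fun t => logIntegrand (A + t • X) X s) (bkmIntegrand (A + t • X) X s) t := by
  open scoped Matrix.Norms.L2Operator in
  let reTraceMul : Matrix n n ℂ →L[ℝ] ℝ := LinearMap.toContinuousLinearMap
    (Complex.reLm ∘ₗ traceLinearMap n ℝ ℂ ∘ₗ LinearMap.mulLeft ℝ X)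
  have h := (reTraceMul.hasFDerivAt.comp_hasDerivAt t (hasDerivAt_shiftedInv hs hA)).const_sub
    ((1 + s)⁻¹ * X.trace.re)
  rw [map_neg, neg_neg] at h
  simpa only [bkmIntegrand, hX.eq, mul_assoc] using! h

/-- Near `t` the integrands differentiated under the integral sign are dominated by the one at
`(A + t X) / 2`, which is below all nearby points of the line in the Loewner order. -/
theorem hasDerivAt_re_trace_mul_log {t : ℝ} (hX : X.IsHermitian) (hA : (A + t • X).PosDef) :
    HasDerivAt (fun t => (X * cfc Real.log (A + t • X)).trace.re)
      (∫ s in Ioi 0, bkmIntegrand (A + t • X) X s) t := by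
  have hhalf : ((2⁻¹ : ℝ) • (A + t • X)).PosDef := hA.smul (by norm_num)
  have hnear := eventually_half_smul_le_add_smul hA hX
  have h := hasDerivAt_integral_of_dominated_loc_of_deriv_le (μ := volume.restrict (Ioi 0))
    (F := fun u => logIntegrand (A + u • X) X) (F' := fun u => bkmIntegrand (A + u • X) X)
    (bound := bkmIntegrand ((2⁻¹ : ℝ) • (A + t • X)) X) hnear ?_
    (integrableOn_logIntegrand hA X) (integrableOn_bkmIntegrand hA X).aestronglyMeasurable
    ?_ (integrableOn_bkmIntegrand hhalf X) ?_
  · refine h.2.congr_of_eventuallyEq ?_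
    filter_upwards [hnear] with u hu
    exact (integral_logIntegrand (posDef_of_le hhalf hu) X).symm
  · filter_upwards [hnear] with u hu
    exact (integrableOn_logIntegrand (posDef_of_le hhalf hu) X).aestronglyMeasurable
  · filter_upwards [self_mem_ae_restrict measurableSet_Ioi] with s (hs : 0 < s) u hu
    rw [Real.norm_of_nonneg (bkmIntegrand_nonneg (posDef_of_le hhalf hu) X hs.le)]
    exact bkmIntegrand_antitone hhalf hu X hs.le
  · filter_upwards [self_mem_ae_restrict measurableSet_Ioi] with s (hs : 0 < s) u hu
    exact hasDerivAt_logIntegrand hX hs.le (posDef_of_le hhalf hu)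

end ShiftedInverse

section BKM

open Set
open scoped MatrixOrder

variable {A B : Matrix (Fin d) (Fin d) ℂ} {a : ℝ}

theorem bkm_antitone (hA : A.PosDef) (hAB : A ≤ B) (X : Matrix (Fin d) (Fin d) ℂ) :
    bkm B X ≤ bkm A X :=
  setIntegral_mono_on (integrableOn_bkmIntegrand (posDef_of_le hA hAB) X)
    (integrableOn_bkmIntegrand hA X) measurableSet_Ioi
    fun _ (hs : 0 < _) => bkmIntegrand_antitone hA hAB X hs.le

theorem bkm_smul (ha : 0 < a) (A X : Matrix (Fin d) (Fin d) ℂ) : bkm (a • A) X = bkm A X / a := by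
  have h := integral_comp_mul_left_Ioi (bkmIntegrand (a • A) X) 0 ha
  simp only [bkmIntegrand_smul ha.ne', integral_const_mul, mul_zero, smul_eq_mul] at h
  change ∫ s in Ioi 0, bkmIntegrand (a • A) X s = (∫ s in Ioi 0, bkmIntegrand A X s) / a
  field_simp at h ⊢
  linarith

theorem bkm_le_div_of_smul_le (ha : 0 < a) (hA : A.PosDef) (hAB : a • A ≤ B)
    (X : Matrix (Fin d) (Fin d) ℂ) : bkm B X ≤ bkm A X / a :=
  (bkm_antitone (hA.smul ha) hAB X).trans_eq (bkm_smul ha A X)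

theorem div_le_bkm_of_le_smul (ha : 0 < a) (hB : B.PosDef) (hBA : B ≤ a • A)
    (X : Matrix (Fin d) (Fin d) ℂ) : bkm A X / a ≤ bkm B X :=
  (bkm_smul ha A X).symm.trans_le (bkm_antitone hB hBA X)

end BKM

section RelativeEntropy

open scoped MatrixOrder

variable {A B P Q X : Matrix (Fin d) (Fin d) ℂ}

/-- Klein's inequality. -/
theorem re_trace_sub_re_trace_le_relEnt (hA : A.PosSemidef) (hB : B.PosDef) :
    A.trace.re - B.trace.re ≤ relEnt A B := by
  have htrace (f g : ℝ → ℝ) : (cfc f A * cfc g B).trace.re = ∑ j, ∑ i,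
      eigenOverlap hA.1 hB.1 1 i j * (f (hA.1.eigenvalues i) * g (hB.1.eigenvalues j)) := by
    simpa using re_trace_conjTranspose_mul_cfc_mul_cfc hA.1 hB.1 1 f g
  have hAlogA := htrace (fun x => x * Real.log x) (fun _ => 1)
  have hAlogB := htrace (fun x => x) Real.log
  have hA1 := htrace (fun x => x) (fun _ => 1)
  have h1B := htrace (fun _ => 1) (fun x => x)
  rw [cfc_const_one ℝ B, mul_one, ← mul_mlog_self hA.1] at hAlogA
  rw [cfc_id' ℝ A, ← mlog_eq_cfc] at hAlogB
  rw [cfc_const_one ℝ B, mul_one, cfc_id' ℝ A] at hA1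
  rw [cfc_const_one ℝ A, one_mul, cfc_id' ℝ B] at h1B
  rw [relEnt, trace_sub, Complex.sub_re, hAlogA, hAlogB, hA1, h1B]
  simp only [← Finset.sum_sub_distrib, ← mul_sub, mul_one, one_mul]
  gcongr with j _ i _
  · exact Complex.normSq_nonneg _
  · exact (sub_le_mul_log_sub_mul_log (hA.eigenvalues_nonneg i) (hB.eigenvalues_pos j)).trans_eq
      (mul_sub _ _ _).symm

theorem relEnt_sub_relEnt (P Q B : Matrix (Fin d) (Fin d) ℂ) :
    relEnt P B - relEnt Q B = relEnt P Q + ((P - Q) * (mlog Q - mlog B)).trace.re := by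
  simp only [relEnt, sub_mul, mul_sub, trace_sub, Complex.sub_re]
  ring

theorem le_relEnt_sub_relEnt (hP : P.PosSemidef) (hQ : Q.PosDef) (B : Matrix (Fin d) (Fin d) ℂ) :
    (P - Q).trace.re + ((P - Q) * (mlog Q - mlog B)).trace.re ≤ relEnt P B - relEnt Q B := by
  have h := re_trace_sub_re_trace_le_relEnt hP hQ
  rw [relEnt_sub_relEnt, trace_sub, Complex.sub_re]
  gcongr

theorem relEnt_self (A : Matrix (Fin d) (Fin d) ℂ) : relEnt A A = 0 := by
  simp [relEnt]

/-- The derivative of `t ↦ relEnt (A + t • X) B`. -/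
def relEntDeriv (A X B : Matrix (Fin d) (Fin d) ℂ) (t : ℝ) : ℝ :=
  X.trace.re + (X * (mlog (A + t • X) - mlog B)).trace.re

theorem hasDerivAt_relEntDeriv {t : ℝ} (hX : X.IsHermitian) (hA : (A + t • X).PosDef)
    (B : Matrix (Fin d) (Fin d) ℂ) :
    HasDerivAt (relEntDeriv A X B) (bkm (A + t • X) X) t := by
  have h := ((hasDerivAt_re_trace_mul_log hX hA).sub_const (X * mlog B).trace.re).const_add
    X.trace.re
  refine h.congr_of_eventuallyEq (.of_forall fun t => ?_)
  simp only [relEntDeriv, mul_sub, trace_sub, Complex.sub_re, mlog_eq_cfc]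

theorem hasDerivAt_relEnt {t : ℝ} (hX : X.IsHermitian) (hA : (A + t • X).PosDef)
    (B : Matrix (Fin d) (Fin d) ℂ) :
    HasDerivAt (fun t => relEnt (A + t • X) B) (relEntDeriv A X B t) t := by
  refine hasDerivAt_of_subgradient (hasDerivAt_relEntDeriv hX hA B).continuousAt ?_
  have hsub (u v : ℝ) : A + v • X - (A + u • X) = (v - u) • X := by module
  have hgrad (u v : ℝ) (hu : (A + u • X).PosDef) (hv : (A + v • X).PosDef) :
      (v - u) * relEntDeriv A X B u ≤ relEnt (A + v • X) B - relEnt (A + u • X) B := by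
    have h := le_relEnt_sub_relEnt hv.posSemidef hu B
    rwa [hsub, smul_mul_assoc, trace_smul, trace_smul, Complex.smul_re, Complex.smul_re,
      ← smul_add] at h
  filter_upwards [eventually_half_smul_le_add_smul hA hX] with v hle
  have hv : (A + v • X).PosDef := posDef_of_le (hA.smul (by norm_num)) hle
  exact ⟨hgrad t v hA hv, by linarith [hgrad v t hv hA]⟩

theorem continuous_relEnt_add_smul (hA : A.IsHermitian) (hX : X.IsHermitian)
    (B : Matrix (Fin d) (Fin d) ℂ) : Continuous fun t : ℝ => relEnt (A + t • X) B := by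
  have hcfc := continuous_cfc_add_smul hA hX Real.continuous_mul_log
  simp only [relEnt, mul_mlog_self (hA.add (hX.smul (.all _)))]
  fun_prop

end RelativeEntropy

section Comparison

open Set
open scoped MatrixOrder

variable {ρ σ : Matrix (Fin d) (Fin d) ℂ} {t : ℝ}

theorem one_sub_smul_le_segment (σ : Matrix (Fin d) (Fin d) ℂ) (hρ : 0 ≤ ρ) (ht : 0 ≤ t) :
    (1 - t) • σ ≤ σ + t • (ρ - σ) := by
  calc (1 - t) • σ ≤ (1 - t) • σ + t • ρ := le_add_of_nonneg_right (smul_nonneg ht hρ)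
    _ = σ + t • (ρ - σ) := by module

theorem segment_le_smul {c : ℝ} (hle : ρ ≤ c • σ) (ht : 0 ≤ t) :
    σ + t • (ρ - σ) ≤ (1 + (c - 1) * t) • σ := by
  calc σ + t • (ρ - σ) ≤ σ + t • (c • σ - σ) := by gcongr
    _ = (1 + (c - 1) * t) • σ := by module

theorem posDef_segment (hρ : ρ.PosSemidef) (hσ : σ.PosDef) (ht : t ∈ Ico (0 : ℝ) 1) :
    (σ + t • (ρ - σ)).PosDef :=
  posDef_of_le (hσ.smul (sub_pos.2 ht.2)) (one_sub_smul_le_segment σ hρ.nonneg ht.1)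

theorem kfun_mul_bkm_le_relEnt (hρ : ρ.PosSemidef) (hσ : σ.PosDef) {c : ℝ} (hc : 0 ≤ c)
    (hc1 : c ≠ 1) (hle : ρ ≤ c • σ) :
    kfun c * bkm σ (ρ - σ) ≤ relEnt ρ σ - (ρ - σ).trace.re := by
  have hX : (ρ - σ).IsHermitian := hρ.1.sub hσ.1
  have hlower : ∀ t ∈ Ioo (0 : ℝ) 1,
      bkm σ (ρ - σ) / (1 + (c - 1) * t) ≤ bkm (σ + t • (ρ - σ)) (ρ - σ) := fun t ht =>
    div_le_bkm_of_le_smul (one_add_mul_pos hc (Ioo_subset_Ico_self ht))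
      (posDef_segment hρ hσ (Ioo_subset_Ico_self ht)) (segment_le_smul hle ht.1.le) _
  have h := kfun_mul_le_of_le_second_deriv hc hc1
    (continuous_relEnt_add_smul hσ.1 hX σ).continuousOn
    (fun t ht => hasDerivAt_relEnt hX (posDef_segment hρ hσ ht) σ)
    (fun t ht => hasDerivAt_relEntDeriv hX (posDef_segment hρ hσ (Ioo_subset_Ico_self ht)) σ)
    hlower
  simpa [relEntDeriv, relEnt_self] using h

theorem relEnt_le_bkm (hρ : ρ.PosSemidef) (hσ : σ.PosDef) :
    relEnt ρ σ - (ρ - σ).trace.re ≤ bkm σ (ρ - σ) := by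
  have hX : (ρ - σ).IsHermitian := hρ.1.sub hσ.1
  have hupper : ∀ t ∈ Ioo (0 : ℝ) 1,
      bkm (σ + t • (ρ - σ)) (ρ - σ) ≤ bkm σ (ρ - σ) / (1 + (0 - 1) * t) := fun t ht => by
    refine bkm_le_div_of_smul_le (one_add_mul_pos le_rfl (Ioo_subset_Ico_self ht)) hσ ?_ _
    calc (1 + (0 - 1) * t) • σ = (1 - t) • σ := by module
      _ ≤ σ + t • (ρ - σ) := one_sub_smul_le_segment σ hρ.nonneg ht.1.le
  have h := le_kfun_mul_of_second_deriv_le le_rfl zero_ne_one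
    (continuous_relEnt_add_smul hσ.1 hX σ).continuousOn
    (fun t ht => hasDerivAt_relEnt hX (posDef_segment hρ hσ ht) σ)
    (fun t ht => hasDerivAt_relEntDeriv hX (posDef_segment hρ hσ (Ioo_subset_Ico_self ht)) σ)
    hupper
  simpa [relEntDeriv, relEnt_self, kfun_zero] using h

theorem relEnt_bkm_comparison_general (hρ : ρ.PosSemidef) (hσ : σ.PosDef) {c : ℝ} (hc : 0 ≤ c)
    (hc1 : c ≠ 1) (hle : ((c : ℂ) • σ - ρ).PosSemidef) :
    kfun c * bkm σ (ρ - σ) ≤ relEnt ρ σ - (ρ - σ).trace.re ∧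
      relEnt ρ σ - (ρ - σ).trace.re ≤ bkm σ (ρ - σ) :=
  ⟨kfun_mul_bkm_le_relEnt hρ hσ hc hc1 (le_iff.2 hle), relEnt_le_bkm hρ hσ⟩

end Comparison

/-- if `ρ ≤ c·σ` with `c > 1` then
`k(c)·γ_σ(ρ−σ) ≤ D(ρ‖σ) ≤ γ_σ(ρ−σ)`. -/
theorem relEnt_bkm_comparison
    (ρ σ : Matrix (Fin d) (Fin d) ℂ) (hρ : ρ.PosDef) (hσ : σ.PosDef)
    (hρ1 : ρ.trace = 1) (hσ1 : σ.trace = 1)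
    (c : ℝ) (hc : 1 < c) (hle : ((c : ℂ) • σ - ρ).PosSemidef) :
    kfun c * bkm σ (ρ - σ) ≤ relEnt ρ σ ∧ relEnt ρ σ ≤ bkm σ (ρ - σ) := by
  simpa [trace_sub, hρ1, hσ1] using relEnt_bkm_comparison_general hρ.posSemidef hσ
    (zero_le_one.trans hc.le) hc.ne' hle
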